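/- Let τ ∈ H and let (x,y) ∈ ℝ² with x ≠ 0 and x² ≠ y². Then the regularized Fourier transform F(φ̃_{−1/τ})(x,y) := lim_{T'→∞} ∫_{−T'}^{T'} ( lim_{T→∞} ∫_{−T}^{T} φ̃_{−1/τ}((a−b)/√2, (a+b)/√2)·e( −((a−b)/√2)·x + ((a+b)/√2)·y ) db ) da exists and equals τ·φ̃_τ(x,y). -/

import Mathlib

open MeasureTheory Filter Set intervalIntegral

noncomputable section

/-- `e(z) = exp(2πiz)` -/
def eC (z : ℂ) : ℂ := Complex.exp (2 * Real.pi * Complex.I * z)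

/-- The complementary error function `erfc(x) = (2/√π)∫_x^∞ e^{-r²} dr`. -/
def erfc (x : ℝ) : ℝ := (2 / Real.sqrt Real.pi) * ∫ r in Set.Ioi x, Real.exp (-(r ^ 2))

/-- `φ*_τ(x,y) = e(((y²-x²)/2)τ)·sgn(x)·erfc(√(2πv)|x|)`. -/
def phiStar (τ : ℂ) (x y : ℝ) : ℂ :=
  eC ((((y : ℂ) ^ 2 - (x : ℂ) ^ 2) / 2) * τ) * (Real.sign x : ℂ) *
    (erfc (Real.sqrt (2 * Real.pi * τ.im) * |x|) : ℂ)

/-- `φ⁺_τ(x,y) = e(((y²-x²)/2)τ)·sgn(x)·1_{y²>x²}`. -/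
def phiPlus (τ : ℂ) (x y : ℝ) : ℂ :=
  eC ((((y : ℂ) ^ 2 - (x : ℂ) ^ 2) / 2) * τ) * (Real.sign x : ℂ) *
    (if x ^ 2 < y ^ 2 then 1 else 0)

/-- `φ̃_τ = φ⁺_τ - φ*_τ`. -/
def phiTilde (τ : ℂ) (x y : ℝ) : ℂ := phiPlus τ x y - phiStar τ x y

/-- The rotated integrand of the regularized Fourier transform of `φ̃_σ`. -/
def ftTildeIntegrand (σ : ℂ) (x y a b : ℝ) : ℂ :=
  phiTilde σ ((a - b) / Real.sqrt 2) ((a + b) / Real.sqrt 2) *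
    eC ((-(((a - b) / Real.sqrt 2) * x) + ((a + b) / Real.sqrt 2) * y : ℝ) : ℂ)

lemma eC_add (z w : ℂ) : eC (z + w) = eC z * eC w := by
  unfold eC; rw [mul_add, Complex.exp_add]

lemma eC_zero : eC 0 = 1 := by simp [eC]

lemma eC_ne (z : ℂ) : eC z ≠ 0 := Complex.exp_ne_zero _

lemma norm_eC (z : ℂ) : ‖eC z‖ = Real.exp (-(2 * Real.pi * z.im)) := by
  unfold eC
  rw [Complex.norm_exp]
  congr 1
  simp

lemma norm_eC_real (t : ℝ) : ‖eC t‖ = 1 := by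
  rw [norm_eC]; simp

@[fun_prop]
lemma continuous_eC : Continuous eC := by
  unfold eC; fun_prop

lemma hasDerivAt_eC {f : ℝ → ℂ} {f' : ℂ} {t : ℝ} (h : HasDerivAt f f' t) :
    HasDerivAt (fun s => eC (f s)) (2 * Real.pi * Complex.I * f' * eC (f t)) t := by
  unfold eC
  have := (h.const_mul (2 * Real.pi * Complex.I)).cexp
  convert this using 1
  ring

lemma twoPiI_ne : (2 * Real.pi * Complex.I : ℂ) ≠ 0 := Complex.two_pi_I_ne_zero

/-- square root constant -/
def sqK (τ : ℂ) : ℂ := (-Complex.I * τ) ^ (1 / 2 : ℂ)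

lemma gauss_integrable (σ : ℂ) (hσ : 0 < σ.im) (y : ℂ) :
    Integrable (fun Y : ℝ => eC ((Y : ℂ) ^ 2 / 2 * σ + Y * y)) := by
  have h : (Real.pi * Complex.I * σ).re < 0 := by
    simp; positivity
  have := integrable_cexp_quadratic' h (2 * Real.pi * Complex.I * y) 0
  convert this using 2 with Y
  unfold eC
  congr 1
  ring

lemma gauss_integral (σ τ : ℂ) (hσ : 0 < σ.im) (hst : σ * τ = -1) (y : ℂ) :
    ∫ Y : ℝ, eC ((Y : ℂ) ^ 2 / 2 * σ + Y * y) = sqK τ * eC (y ^ 2 / 2 * τ) := by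
  have h : (Real.pi * Complex.I * σ).re < 0 := by
    simp; positivity
  have := integral_cexp_quadratic h (2 * Real.pi * Complex.I * y) 0
  have h0 : σ ≠ 0 := by rintro rfl; simp at hσ
  have hτ : τ = -1 / σ := by field_simp; rw [mul_comm]; exact hst
  have hpi : (Real.pi : ℂ) ≠ 0 := by exact_mod_cast Real.pi_ne_zero
  convert this using 2
  · ext Y
    unfold eC
    congr 1
    ring
  · unfold sqK
    congr 1
    rw [hτ]; field_simp
    simp
  · unfold eC
    congr 1
    rw [hτ]; field_simp
    linear_combination (0 : ℂ) * Complex.I_sq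

lemma arg_ne (τ : ℂ) (hτ : 0 < τ.im) : (-Complex.I * τ).arg ≠ Real.pi := by
  intro h
  rw [Complex.arg_eq_pi_iff] at h
  simp at h
  linarith [h.1]

lemma sq_mul (σ τ : ℂ) (hτ : 0 < τ.im) (hst : σ * τ = -1) : sqK σ * sqK τ = 1 := by
  have h0 : τ ≠ 0 := by rintro rfl; simp at hτ
  have : -Complex.I * σ = (-Complex.I * τ)⁻¹ := by
    apply eq_inv_of_mul_eq_one_left
    linear_combination Complex.I ^ 2 * hst - Complex.I_sq
  unfold sqK
  rw [this, Complex.inv_cpow _ _ (arg_ne τ hτ), inv_mul_cancel₀]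
  simp [Complex.cpow_eq_zero_iff, h0]

lemma sq_half (τ : ℂ) (hτ : 0 < τ.im) : sqK (τ / 2) * Real.sqrt 2 = sqK τ := by
  unfold sqK
  have h0 : τ ≠ 0 := by rintro rfl; simp at hτ
  have : -Complex.I * τ = ((2 : ℝ) : ℂ) * (-Complex.I * (τ / 2)) := by push_cast; ring
  have h1 : -Complex.I * (τ / 2) ≠ 0 := by simp [h0]
  have h2 : ((2 : ℝ) : ℂ) * (-Complex.I * (τ / 2)) ≠ 0 := by rw [← this]; simp [h0]
  rw [this, Real.sqrt_eq_rpow, Complex.ofReal_cpow (by norm_num), Complex.cpow_def_of_ne_zero h1,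
    Complex.cpow_def_of_ne_zero h2, Complex.log_ofReal_mul (by norm_num) h1,
    Complex.cpow_def_of_ne_zero (by norm_num), ← Complex.exp_add,
    ← Complex.ofReal_log (by norm_num)]
  congr 1
  push_cast
  ring

lemma sq_conj (τ : ℂ) (hτ : 0 < τ.im) :
    sqK (-(starRingEnd ℂ τ)) * sqK τ = (‖τ‖ : ℂ) := by
  unfold sqK
  have : -Complex.I * -(starRingEnd ℂ τ) = starRingEnd ℂ (-Complex.I * τ) := by simp
  have h2 : (1/2 : ℂ) = starRingEnd ℂ (1/2 : ℂ) := by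
    have := Complex.conj_ofReal (1/2)
    push_cast at this
    exact this.symm
  rw [this, Complex.conj_cpow _ _ (arg_ne τ hτ), ← h2, mul_comm, Complex.mul_conj, Complex.normSq_eq_norm_sq]
  have h0 : -Complex.I * τ ≠ 0 := by
    intro h
    have : τ = 0 := by simpa using h
    rw [this] at hτ; simp at hτ
  have := Complex.norm_cpow_real (-Complex.I * τ) (1/2)
  push_cast at this
  rw [this, ← Real.sqrt_eq_rpow, Real.sq_sqrt (norm_nonneg _)]
  simp

lemma shift_Ioi {E : Type*} [NormedAddCommGroup E] [NormedSpace ℝ E] (f : ℝ → E) (t : ℝ) :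
    ∫ r in Set.Ioi (0:ℝ), f (r + t) = ∫ r in Set.Ioi t, f r := by
  have := (measurePreserving_add_right volume t).setIntegral_preimage_emb
    (measurableEmbedding_addRight t) f (Set.Ioi t)
  rw [← this]
  simp

lemma gaussR_integrable : Integrable (fun r : ℝ => Real.exp (-(r ^ 2))) := by
  simpa using integrable_exp_neg_mul_sq (b := 1) one_pos

lemma erfc_eq (t : ℝ) :
    erfc t = 1 - (2 / Real.sqrt Real.pi) * ∫ r in (0:ℝ)..t, Real.exp (-(r ^ 2)) := by
  have h1 := intervalIntegral.integral_Ioi_sub_Ioi' (μ := volume) (a := 0) (b := t)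
    gaussR_integrable.integrableOn gaussR_integrable.integrableOn
  have h2 : ∫ r in Set.Ioi (0:ℝ), Real.exp (-(r ^ 2)) = Real.sqrt Real.pi / 2 := by
    simpa using integral_gaussian_Ioi 1
  unfold erfc
  rw [← h1, h2]
  have : Real.sqrt Real.pi ≠ 0 := (Real.sqrt_pos.2 Real.pi_pos).ne'
  field_simp
  ring

lemma erfc_zero : erfc 0 = 1 := by rw [erfc_eq]; simp

lemma erfc_hasDerivAt (t : ℝ) :
    HasDerivAt erfc (-((2 / Real.sqrt Real.pi) * Real.exp (-(t ^ 2)))) t := by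
  have : erfc = fun t => 1 - (2 / Real.sqrt Real.pi) * ∫ r in (0:ℝ)..t, Real.exp (-(r ^ 2)) :=
    funext erfc_eq
  rw [this]
  have hc : Continuous (fun r : ℝ => Real.exp (-(r ^ 2))) := by fun_prop
  have := ((hc.integral_hasStrictDerivAt 0 t).hasDerivAt.const_mul (2 / Real.sqrt Real.pi)).const_sub 1
  exact this

@[fun_prop]
lemma continuous_erfc : Continuous erfc :=
  continuous_iff_continuousAt.2 fun t => (erfc_hasDerivAt t).continuousAt

lemma erfc_nonneg (t : ℝ) : 0 ≤ erfc t := by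
  unfold erfc
  apply mul_nonneg (by positivity)
  exact setIntegral_nonneg measurableSet_Ioi (fun r _ => (Real.exp_pos _).le)

lemma erfc_le (t : ℝ) (ht : 0 ≤ t) : erfc t ≤ Real.exp (-(t ^ 2)) := by
  unfold erfc
  have h2 : ∫ r in Set.Ioi (0:ℝ), Real.exp (-(r ^ 2)) = Real.sqrt Real.pi / 2 := by
    simpa using integral_gaussian_Ioi 1
  have h3 : ∫ r in Set.Ioi t, Real.exp (-(r ^ 2)) =
      ∫ r in Set.Ioi (0:ℝ), Real.exp (-((r + t) ^ 2)) := by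
    exact (shift_Ioi (fun r : ℝ => Real.exp (-(r ^ 2))) t).symm
  have h4 : ∫ r in Set.Ioi (0:ℝ), Real.exp (-((r + t) ^ 2)) ≤
      ∫ r in Set.Ioi (0:ℝ), Real.exp (-(t ^ 2)) * Real.exp (-(r ^ 2)) := by
    apply setIntegral_mono_on
    · exact (gaussR_integrable.comp_add_right t).integrableOn
    · exact (gaussR_integrable.const_mul _).integrableOn
    · exact measurableSet_Ioi
    · intro r hr
      rw [← Real.exp_add]
      apply Real.exp_le_exp.2
      have : 0 < r := hr
      nlinarith [mul_nonneg this.le ht]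
  rw [MeasureTheory.integral_const_mul, h2] at h4
  rw [h3]
  have hp : 0 < Real.sqrt Real.pi := (Real.sqrt_pos.2 Real.pi_pos)
  calc _ ≤ 2 / Real.sqrt Real.pi * (Real.exp (-(t ^ 2)) * (Real.sqrt Real.pi / 2)) := by gcongr
    _ = _ := by field_simp

lemma eC_mul_exp (z : ℂ) (s : ℝ) : eC (s * z) = Complex.exp ((2 * Real.pi * Complex.I * z) * s) := by
  unfold eC; congr 1; ring

lemma eC_integral_Ioi (z : ℂ) (hz : 0 < z.im) (c : ℝ) :
    IntegrableOn (fun s : ℝ => eC (s * z)) (Ioi c) ∧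
    ∫ s in Ioi c, eC (s * z) = - eC (c * z) / (2 * Real.pi * Complex.I * z) := by
  have h : (2 * Real.pi * Complex.I * z).re < 0 := by simp; positivity
  simp_rw [eC_mul_exp]
  exact ⟨integrableOn_exp_mul_complex_Ioi h c, integral_exp_mul_complex_Ioi h c⟩

lemma eC_integral_Iic (z : ℂ) (hz : z.im < 0) (c : ℝ) :
    IntegrableOn (fun s : ℝ => eC (s * z)) (Iic c) ∧
    ∫ s in Iic c, eC (s * z) = eC (c * z) / (2 * Real.pi * Complex.I * z) := by
  have h : 0 < (2 * Real.pi * Complex.I * z).re := by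
    simp; nlinarith [Real.pi_pos]
  simp_rw [eC_mul_exp]
  exact ⟨integrableOn_exp_mul_complex_Iic h c, integral_exp_mul_complex_Iic h c⟩

lemma sub_ne (z : ℂ) (hz : 0 < z.im) (a : ℝ) : (a : ℂ) - z ≠ 0 := by
  intro h
  have := congrArg Complex.im h
  simp at this
  linarith

/-- norm bound from below. -/
lemma norm_sub_sq_ge (z : ℂ) (hz : 0 < z.im) :
    ∃ C : ℝ, 0 < C ∧ ∀ a : ℝ, C * (1 + a ^ 2) ≤ ‖(a : ℂ) - z‖ ^ 2 := by
  have key : ∀ a : ℝ, ‖(a : ℂ) - z‖ ^ 2 = (a - z.re) ^ 2 + z.im ^ 2 := by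
    intro a
    rw [← Complex.normSq_eq_norm_sq, Complex.normSq_apply]; simp; ring
  set r := z.re
  set v := z.im
  refine ⟨v ^ 2 / (1 + 2 * r ^ 2 + 2 * v ^ 2), by positivity, fun a => ?_⟩
  rw [key, div_mul_eq_mul_div, div_le_iff₀ (by positivity)]
  have h1 : a ^ 2 ≤ 2 * (a - r) ^ 2 + 2 * r ^ 2 := by nlinarith [sq_nonneg (a - 2 * r)]
  have h2 : v ^ 2 * a ^ 2 ≤ v ^ 2 * (2 * (a - r) ^ 2 + 2 * r ^ 2) := by gcongr
  nlinarith [sq_nonneg (a - r), sq_nonneg v, mul_nonneg (sq_nonneg (a - r)) (sq_nonneg r),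
    mul_nonneg (sq_nonneg v) (sq_nonneg v), mul_nonneg (sq_nonneg v) (sq_nonneg r)]

lemma inv_sq_integrable (z : ℂ) (hz : 0 < z.im) :
    Integrable (fun a : ℝ => (1 : ℂ) / ((a : ℂ) - z) ^ 2) := by
  obtain ⟨C, hC, h⟩ := norm_sub_sq_ge z hz
  refine (integrable_inv_one_add_sq.const_mul C⁻¹).mono' ?_ ?_
  · apply Continuous.aestronglyMeasurable
    apply Continuous.div (by fun_prop) (by fun_prop)
    intro a; exact pow_ne_zero _ (sub_ne z hz a)
  · refine Eventually.of_forall fun a => ?_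
    simp only [norm_div, norm_one, norm_pow]
    rw [← mul_inv, one_div]
    exact inv_anti₀ (by positivity) (h a)

def fI (z : ℂ) (s : ℝ) : ℂ := (max s 0 : ℝ) * eC (s * z)

lemma fI_eq (z : ℂ) : fI z = (Ioi (0:ℝ)).indicator (fun s : ℝ => (s : ℂ) * eC (s * z)) := by
  ext s
  by_cases hs : 0 < s
  · simp [fI, hs, max_eq_left hs.le]
  · simp [fI, hs, max_eq_right (not_lt.1 hs)]

lemma fI_int (z : ℂ) (hz : 0 < z.im) :
    IntegrableOn (fun s : ℝ => (s : ℂ) * eC (s * z)) (Ioi 0) ∧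
    ∫ s in Ioi (0:ℝ), (s : ℂ) * eC (s * z) = 1 / (2 * Real.pi * Complex.I * z) ^ 2 := by
  have hI : IntegrableOn (fun s : ℝ => (s : ℂ) * eC (s * z)) (Ioi 0) := by
    have h1 : IntegrableOn (fun s : ℝ => s ^ (1:ℝ) * Real.exp (-(2 * Real.pi * z.im) * s ^ (1:ℝ))) (Ioi 0) :=
      integrableOn_rpow_mul_exp_neg_mul_rpow (by norm_num) (by norm_num) (by positivity)
    refine h1.mono' ?_ ?_
    · apply Continuous.aestronglyMeasurable; fun_prop
    · refine (ae_restrict_iff' measurableSet_Ioi).2 (Eventually.of_forall fun s hs => ?_)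
      have hs : 0 < s := hs
      simp only [norm_mul, norm_eC, Complex.norm_real, Real.norm_eq_abs, abs_of_pos hs, Real.rpow_one]
      simp
      apply le_of_eq; ring_nf
  refine ⟨hI, ?_⟩
  set w : ℂ := 2 * Real.pi * Complex.I * z with hw
  have hz0 : z ≠ 0 := by rintro rfl; simp at hz
  have hw0 : w ≠ 0 := mul_ne_zero twoPiI_ne hz0
  have hder : ∀ s : ℝ, HasDerivAt (fun s : ℝ => w⁻¹ * ((s : ℂ) * eC (s * z)) - (w ^ 2)⁻¹ * eC (s * z))
      ((s : ℂ) * eC (s * z)) s := by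
    intro s
    have h1 : HasDerivAt (fun a : ℝ => (a : ℂ)) 1 s := Complex.ofRealCLM.hasDerivAt
    have h3 := hasDerivAt_eC (h1.mul_const z)
    have := ((h1.fun_mul h3).const_mul w⁻¹).fun_sub (h3.const_mul (w ^ 2)⁻¹)
    refine this.congr_deriv ?_
    rw [one_mul, one_mul, ← hw]
    field_simp
    ring
  have hI2 : IntegrableOn (fun s : ℝ => w⁻¹ * ((s : ℂ) * eC (s * z)) - (w ^ 2)⁻¹ * eC (s * z)) (Ioi 0) :=
    (hI.const_mul _).sub ((eC_integral_Ioi z hz 0).1.const_mul _)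
  have := integral_Ioi_of_hasDerivAt_of_tendsto (hder 0).continuousAt.continuousWithinAt
    (fun s _ => hder s) hI (tendsto_zero_of_hasDerivAt_of_integrableOn_Ioi (fun s _ => hder s) hI hI2)
  rw [this]
  simp [eC_zero]

open FourierTransform in
lemma fI_fourier (z : ℂ) (hz : 0 < z.im) (p : ℝ) :
    ∫ a : ℝ, eC (a * p) * (1 / ((a : ℂ) - z) ^ 2) = (2 * Real.pi * Complex.I) ^ 2 * fI z p := by
  have hF : 𝓕 (fI z) = fun a : ℝ => (1 / (2 * Real.pi * Complex.I) ^ 2) * (1 / ((a : ℂ) - z) ^ 2) := by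
    ext a
    rw [Real.fourier_eq']
    have h2 := (fI_int (z - a) (by simpa using hz)).2
    have : ∀ s : ℝ, Complex.exp (↑(-2 * Real.pi * inner ℝ s a) * Complex.I) • fI z s =
        (Ioi (0:ℝ)).indicator (fun s : ℝ => (s : ℂ) * eC (s * (z - a))) s := by
      intro s
      rw [fI_eq]
      by_cases hs : 0 < s
      · simp only [mem_Ioi, hs, indicator_of_mem]
        rw [mul_sub, sub_eq_add_neg, eC_add]
        simp only [smul_eq_mul]
        rw [mul_left_comm, mul_comm (eC (s * z))]
        congr 2
        unfold eC
        congr 1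
        simp
        ring
      · simp [hs]
    simp_rw [this]
    rw [MeasureTheory.integral_indicator measurableSet_Ioi, h2, mul_pow, one_div_mul_one_div]
    congr 2
    ring
  have hcont : Continuous (fI z) := by unfold fI; fun_prop
  have hInt0 : Integrable (fI z) := by
    rw [fI_eq, integrable_indicator_iff measurableSet_Ioi]
    exact (fI_int z hz).1
  have hFi : Integrable (𝓕 (fI z)) := by
    rw [hF]; exact (inv_sq_integrable z hz).const_mul _
  have := congrFun (hcont.fourierInv_fourier_eq hInt0 hFi) p
  rw [Real.fourierInv_eq', hF] at this
  rw [← this, ← MeasureTheory.integral_const_mul]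
  congr 1
  ext a
  have h := twoPiI_ne
  simp only [smul_eq_mul]
  have e : Complex.exp (↑(2 * Real.pi * inner ℝ a p) * Complex.I) = eC (a * p) := by
    unfold eC; congr 1; simp; ring
  rw [e]
  have h3 := sub_ne z hz a
  field_simp

lemma P2_core (z : ℂ) (hz : 0 < z.im) (p : ℝ) (hp : p ≠ 0) :
    Tendsto (fun T : ℝ => ∫ a in (-T)..T, eC (a * p) * (1 / ((a : ℂ) - z))) atTop
      (nhds (2 * Real.pi * Complex.I * (if 0 < p then eC (p * z) else 0))) := by
  have hpc : (p : ℂ) ≠ 0 := by exact_mod_cast hp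
  have h2 := twoPiI_ne
  set k : ℂ := 2 * Real.pi * Complex.I * p with hk
  have hk0 : k ≠ 0 := mul_ne_zero h2 hpc
  have hInt0 : Integrable (fun a : ℝ => eC (a * p) * (1 / ((a : ℂ) - z) ^ 2)) := by
    refine (inv_sq_integrable z hz).norm.mono' ?_ ?_
    · exact (Continuous.aestronglyMeasurable (by fun_prop)).mul (inv_sq_integrable z hz).1
    · refine Eventually.of_forall fun a => ?_
      rw [norm_mul, ← Complex.ofReal_mul, norm_eC_real, one_mul]
  have hder : ∀ a : ℝ, HasDerivAt (fun a : ℝ => k⁻¹ * (eC (a * p) * (1 / ((a : ℂ) - z))))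
      (eC (a * p) * (1 / ((a : ℂ) - z)) - k⁻¹ * (eC (a * p) * (1 / ((a : ℂ) - z) ^ 2))) a := by
    intro a
    have h1 : HasDerivAt (fun a : ℝ => (a : ℂ)) 1 a := Complex.ofRealCLM.hasDerivAt
    have h3 := hasDerivAt_eC (h1.mul_const (p : ℂ))
    have h4 := ((h1.sub_const z).fun_inv (sub_ne z hz a))
    have := (h3.fun_mul h4).const_mul k⁻¹
    simp only [one_div]
    refine this.congr_deriv ?_
    have h5 := sub_ne z hz a
    rw [one_mul, ← hk]; field_simp; ring
  have hc1 : Continuous (fun a : ℝ => eC (a * p) * (1 / ((a : ℂ) - z))) := by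
    apply Continuous.mul (by fun_prop)
    exact Continuous.div (by fun_prop) (by fun_prop) (sub_ne z hz)
  have hc2 : Continuous (fun a : ℝ => eC (a * p) * (1 / ((a : ℂ) - z) ^ 2)) := by
    apply Continuous.mul (by fun_prop)
    exact Continuous.div (by fun_prop) (by fun_prop) (fun a => pow_ne_zero _ (sub_ne z hz a))
  have hT : ∀ T : ℝ, ∫ a in (-T)..T, eC (a * p) * (1 / ((a : ℂ) - z)) =
      (k⁻¹ * (eC (T * p) * (1 / ((T : ℂ) - z))) - k⁻¹ * (eC ((-T : ℝ) * p) * (1 / (((-T : ℝ) : ℂ) - z))))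
      + k⁻¹ * ∫ a in (-T)..T, eC (a * p) * (1 / ((a : ℂ) - z) ^ 2) := by
    intro T
    have := intervalIntegral.integral_eq_sub_of_hasDerivAt (a := -T) (b := T) (fun a _ => hder a)
      ((hc1.sub (continuous_const.mul hc2)).intervalIntegrable _ _)
    have hc3 : Continuous (fun a : ℝ => k⁻¹ * (eC (a * p) * (1 / ((a : ℂ) - z) ^ 2))) :=
      continuous_const.mul hc2
    rw [← this, intervalIntegral.integral_sub (hc1.intervalIntegrable _ _)
      (hc3.intervalIntegrable _ _), intervalIntegral.integral_const_mul]
    ring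
  simp_rw [hT]
  have hlim0 : Tendsto (fun a : ℝ => k⁻¹ * (eC (a * p) * (1 / ((a : ℂ) - z)))) (cocompact ℝ) (nhds 0) := by
    rw [← mul_zero k⁻¹]
    apply Tendsto.const_mul
    rw [tendsto_zero_iff_norm_tendsto_zero]
    have : ∀ a : ℝ, ‖eC (a * p) * (1 / ((a : ℂ) - z))‖ = ‖(a : ℂ) - z‖⁻¹ := by
      intro a
      rw [norm_mul, ← Complex.ofReal_mul, norm_eC_real, one_mul]; simp
    simp_rw [this]
    apply Tendsto.inv_tendsto_atTop
    have h6 : Tendsto (fun a : ℝ => ‖a‖ - ‖z‖) (cocompact ℝ) atTop :=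
      tendsto_atTop_add_const_right _ _ (tendsto_norm_cocompact_atTop)
    refine tendsto_atTop_mono (fun a => ?_) h6
    have := norm_sub_norm_le (a : ℂ) z
    simpa using this
  have l1 : Tendsto (fun T : ℝ => k⁻¹ * (eC (T * p) * (1 / ((T : ℂ) - z)))) atTop (nhds 0) :=
    hlim0.mono_left atTop_le_cocompact
  have l2 : Tendsto (fun T : ℝ => k⁻¹ * (eC ((-T : ℝ) * p) * (1 / (((-T : ℝ) : ℂ) - z)))) atTop (nhds 0) :=
    (hlim0.mono_left atBot_le_cocompact).comp tendsto_neg_atTop_atBot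
  have l3 := intervalIntegral_tendsto_integral hInt0 tendsto_neg_atTop_atBot tendsto_id
  rw [fI_fourier z hz p] at l3
  have := (l1.sub l2).add (l3.const_mul k⁻¹)
  simp only [id] at this
  convert this using 2
  unfold fI
  split_ifs with h
  · rw [max_eq_left h.le, hk]; field_simp; ring
  · rw [max_eq_right (not_lt.1 h)]; simp

def k2 (σ : ℂ) (p q a : ℝ) : ℂ := eC (a * p) / (2 * Real.pi * Complex.I * (a * σ + q))

def k1 (σ : ℂ) (p q a : ℝ) : ℂ :=
  eC (a * (p + q) + a ^ 2 * σ) / (2 * Real.pi * Complex.I * (a * σ + q))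

lemma k2_neg (σ : ℂ) (p q a : ℝ) : k2 σ p q (-a) = - k2 σ (-p) (-q) a := by
  unfold k2
  rw [← div_neg]
  congr 1
  · congr 1; push_cast; ring
  · push_cast; ring

lemma k1_neg (σ : ℂ) (p q a : ℝ) : k1 σ p q (-a) = - k1 σ (-p) (-q) a := by
  unfold k1
  rw [← div_neg]
  congr 1
  · congr 1; push_cast; ring
  · push_cast; ring

lemma lin_eq (σ τ : ℂ) (hst : σ * τ = -1) (q a : ℝ) : (a * σ + q : ℂ) = σ * (a - q * τ) := by
  linear_combination (q:ℂ) * hst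

lemma P2_pos (σ τ : ℂ) (hτ : 0 < τ.im) (hst : σ * τ = -1) (p q : ℝ) (hp : p ≠ 0)
    (hq : 0 < q) :
    Tendsto (fun T : ℝ => ∫ a in (-T)..T, k2 σ p q a) atTop
      (nhds (-τ * (if 0 < p then eC (p * q * τ) else 0))) := by
  have hz : 0 < ((q : ℂ) * τ).im := by simp; positivity
  have := (P2_core (q * τ) hz p hp).const_mul (-τ / (2 * Real.pi * Complex.I))
  have h2 := twoPiI_ne
  have hσ0 : σ ≠ 0 := by rintro rfl; simp at hst
  convert this using 2 with T
  · rw [← intervalIntegral.integral_const_mul]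
    congr 1
    ext a
    unfold k2
    have h3 := sub_ne _ hz a
    rw [lin_eq σ τ hst]
    have : τ = -1 / σ := by field_simp; rw [mul_comm]; exact hst
    generalize (a - q * τ : ℂ) = w at *
    rw [this]
    field_simp
  · rw [div_mul_eq_mul_div, mul_comm (2 * Real.pi * Complex.I), ← mul_assoc,
      mul_div_assoc, div_self h2, mul_one, mul_assoc (p:ℂ)]

lemma P2_lim (σ τ : ℂ) (hτ : 0 < τ.im) (hst : σ * τ = -1) (p q : ℝ) (hp : p ≠ 0)
    (hq : q ≠ 0) :
    Tendsto (fun T : ℝ => ∫ a in (-T)..T, k2 σ p q a) atTop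
      (nhds (-τ * (if 0 < p * q then Real.sign p * eC (p * q * τ) else 0))) := by
  rcases lt_or_gt_of_ne hq with hq | hq
  · have := (P2_pos σ τ hτ hst (-p) (-q) (by simpa using hp) (by linarith)).neg
    convert this using 2 with T
    · have h := intervalIntegral.integral_comp_neg (a := -T) (b := T) (fun a => k2 σ p q a)
      rw [neg_neg] at h
      rw [← h, ← intervalIntegral.integral_neg]
      simp_rw [k2_neg]
    · have : 0 < p * q ↔ 0 < -p := by
        constructor
        · intro h; by_contra h'; nlinarith
        · intro h; nlinarith
      simp only [this]
      split_ifs with h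
      · rw [Real.sign_of_neg (by linarith)]; push_cast; ring_nf
      · simp
  · have := P2_pos σ τ hτ hst p q hp hq
    convert this using 3
    have : 0 < p * q ↔ 0 < p := by
      constructor
      · intro h; by_contra h'; nlinarith
      · intro h; positivity
    simp only [this]
    split_ifs with h
    · rw [Real.sign_of_pos h]; simp
    · rfl

lemma half_gauss (σ τ : ℂ) (hτ : 0 < τ.im) (hst : σ * τ = -1) (x : ℝ) :
    ∫ t in Ioi x, eC ((t : ℂ) ^ 2 / 2 * τ) =
      sqK σ / 2 - ∫ t in (0:ℝ)..x, eC ((t : ℂ) ^ 2 / 2 * τ) := by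
  have hi : Integrable (fun t : ℝ => eC ((t : ℂ) ^ 2 / 2 * τ)) := by
    have := gauss_integrable τ hτ 0
    simpa using this
  have h1 := intervalIntegral.integral_Ioi_sub_Ioi' (μ := volume) (a := 0) (b := x)
    hi.integrableOn hi.integrableOn
  have h2 := gauss_integral τ σ hτ (by rw [mul_comm]; exact hst) 0
  have h3 : ∫ t : ℝ, eC ((t : ℂ) ^ 2 / 2 * τ) = 2 * ∫ t in Ioi (0:ℝ), eC ((t : ℂ) ^ 2 / 2 * τ) := by
    rw [← intervalIntegral.integral_Iic_add_Ioi (b := 0) hi.integrableOn hi.integrableOn]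
    have := integral_comp_neg_Iic (0:ℝ) (fun t : ℝ => eC ((t : ℂ) ^ 2 / 2 * τ))
    simp only [Complex.ofReal_neg, neg_sq, neg_zero] at this
    rw [this]; ring
  simp only [mul_zero, add_zero] at h2
  rw [h2] at h3
  rw [← h1]
  simp [eC_zero] at h3
  rw [h3]; ring

lemma P1_pos (σ τ : ℂ) (hτ : 0 < τ.im) (hσ : 0 < σ.im) (hst : σ * τ = -1) (p q : ℝ)
    (hq : 0 < q) :
    Integrable (k1 σ p q) ∧
    ∫ a, k1 σ p q a = τ / 2 * eC (p * q * τ) *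
      (-1 + 2 * sqK τ * ∫ s in (0:ℝ)..((q - p) / Real.sqrt 2), eC ((s : ℂ) ^ 2 / 2 * τ)) := by
  have h2 := twoPiI_ne
  have hσ0 : σ ≠ 0 := by rintro rfl; simp at hst
  have hz : 0 < ((q : ℂ) * τ).im := by simp; positivity
  set f : ℝ → ℝ → ℂ := fun a s =>
    eC ((a : ℂ) ^ 2 / 2 * (2 * σ) + a * (p + q - s)) * eC (s * (q * τ)) with hf
  have hk : ∀ a, k1 σ p q a = -τ * ∫ s in Ioi (0:ℝ), f a s := by
    intro a
    have h3 := sub_ne _ hz a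
    have e1 : ∀ s : ℝ, f a s = eC (a * (p + q) + a ^ 2 * σ) * eC (s * (q * τ - a)) := by
      intro s
      simp only [hf]
      rw [← eC_add, ← eC_add]; congr 1; ring
    simp_rw [e1]
    rw [MeasureTheory.integral_const_mul, (eC_integral_Ioi (q * τ - a) (by simpa using hz) 0).2]
    unfold k1
    rw [lin_eq σ τ hst]
    have : τ = -1 / σ := by field_simp; rw [mul_comm]; exact hst
    have h4 : (q * τ - a : ℂ) = -(a - q * τ) := by ring
    rw [h4]
    generalize (a - q * τ : ℂ) = w at *
    rw [this, Complex.ofReal_zero, zero_mul, eC_zero]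
    field_simp
  have hfi : Integrable (Function.uncurry f) (volume.prod (volume.restrict (Ioi (0:ℝ)))) := by
    have i1 := gauss_integrable (2 * σ) (by simpa using hσ) (p + q)
    have i2 := (eC_integral_Ioi (q * τ) hz 0).1
    have i3 := (i1.mul_prod i2)
    refine i3.norm.mono' ?_ ?_
    · apply Continuous.aestronglyMeasurable
      simp only [hf, Function.uncurry_def]; fun_prop
    · refine Eventually.of_forall fun z => ?_
      simp only [hf, Function.uncurry, norm_mul]
      apply le_of_eq
      congr 1
      have : (z.1 : ℂ) ^ 2 / 2 * (2 * σ) + z.1 * (p + q - z.2) =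
        (z.1 : ℂ) ^ 2 / 2 * (2 * σ) + z.1 * (p + q) + ((-(z.1 * z.2) : ℝ) : ℂ) := by push_cast; ring
      rw [this, eC_add, norm_mul, norm_eC_real, mul_one]
  constructor
  · have := hfi.integral_prod_left.const_mul (-τ)
    refine this.congr (Eventually.of_forall fun a => ?_)
    exact (hk a).symm
  · simp_rw [hk]
    rw [MeasureTheory.integral_const_mul, integral_integral_swap hfi]
    have e2 : ∀ s : ℝ, ∫ a, f a s =
        sqK (τ / 2) * eC (p * q * τ) * eC (((s + (q - p) : ℝ) : ℂ) ^ 2 / 2 * (τ / 2)) := by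
      intro s
      simp only [hf]
      rw [MeasureTheory.integral_mul_const, gauss_integral (2 * σ) (τ / 2) (by simpa using hσ)
        (by linear_combination hst), mul_assoc, mul_assoc, ← eC_add, ← eC_add]
      congr 2
      push_cast; ring
    simp_rw [e2]
    rw [MeasureTheory.integral_const_mul,
      shift_Ioi (fun r : ℝ => eC ((r : ℂ) ^ 2 / 2 * (τ / 2))) (q - p)]
    have hs : 0 < Real.sqrt 2 := by positivity
    have e3 := integral_comp_mul_left_Ioi (fun r : ℝ => eC ((r : ℂ) ^ 2 / 2 * (τ / 2)))
      ((q - p) / Real.sqrt 2) hs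
    rw [mul_div_cancel₀ _ hs.ne'] at e3
    have e4 : ∀ t : ℝ, eC (((Real.sqrt 2 * t : ℝ) : ℂ) ^ 2 / 2 * (τ / 2)) = eC ((t : ℂ) ^ 2 / 2 * τ) := by
      intro t
      congr 1
      have : (Real.sqrt 2 : ℂ) ^ 2 = 2 := by norm_cast; simp
      push_cast
      rw [mul_pow, this]; ring
    simp_rw [e4] at e3
    rw [half_gauss σ τ hτ hst] at e3
    have hsc : (Real.sqrt 2 : ℂ) ≠ 0 := by exact_mod_cast hs.ne'
    have e5 : ∫ r in Ioi (q - p), eC ((r : ℂ) ^ 2 / 2 * (τ / 2)) = Real.sqrt 2 *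
       (sqK σ / 2 - ∫ t in (0:ℝ)..((q - p) / Real.sqrt 2), eC ((t : ℂ) ^ 2 / 2 * τ)) := by
      rw [e3, Complex.real_smul]
      push_cast
      rw [mul_inv_cancel_left₀ hsc]
    rw [e5]
    have s1 := sq_half τ hτ
    have s2 := sq_mul σ τ hτ hst
    generalize (∫ t in (0:ℝ)..((q - p) / Real.sqrt 2), eC ((t : ℂ) ^ 2 / 2 * τ)) = J
    rw [← s1] at s2 ⊢
    linear_combination (-τ * eC (p * q * τ) / 2) * s2

lemma P1_all (σ τ : ℂ) (hτ : 0 < τ.im) (hσ : 0 < σ.im) (hst : σ * τ = -1) (p q : ℝ)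
    (hq : q ≠ 0) :
    Integrable (k1 σ p q) ∧
    ∫ a, k1 σ p q a = τ / 2 * eC (p * q * τ) *
      (-Real.sign q + 2 * sqK τ * ∫ s in (0:ℝ)..((q - p) / Real.sqrt 2), eC ((s : ℂ) ^ 2 / 2 * τ)) := by
  rcases lt_or_gt_of_ne hq with hq | hq
  · obtain ⟨h1, h2⟩ := P1_pos σ τ hτ hσ hst (-p) (-q) (by linarith)
    have e : k1 σ p q = fun a => - k1 σ (-p) (-q) (-a) := by
      ext a
      rw [← k1_neg, neg_neg]
    refine ⟨?_, ?_⟩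
    · rw [e]
      exact h1.comp_neg.neg
    · rw [e, MeasureTheory.integral_neg,
        MeasureTheory.integral_neg_eq_self (fun a => k1 σ (-p) (-q) a), h2,
        Real.sign_of_neg hq]
      have h := intervalIntegral.integral_comp_neg (a := 0) (b := (q - p) / Real.sqrt 2)
        (fun s : ℝ => eC ((s : ℂ) ^ 2 / 2 * τ))
      rw [intervalIntegral.integral_symm, neg_zero] at h
      simp only [Complex.ofReal_neg, neg_sq] at h
      have : (-q - -p) / Real.sqrt 2 = -((q - p) / Real.sqrt 2) := by ring
      rw [this, intervalIntegral.integral_symm, ← h, intervalIntegral.integral_symm]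
      push_cast
      rw [neg_mul_neg]
      ring
  · rw [Real.sign_of_pos hq]
    push_cast
    exact P1_pos σ τ hτ hσ hst p q hq

lemma inner_plus (σ : ℂ) (hσ : 0 < σ.im) (p q a : ℝ) (ha : a ≠ 0) :
    Integrable (fun b : ℝ => eC (a * b * σ) * Real.sign (a - b) * (if 0 < a * b then 1 else 0) *
      eC (a * p + b * q)) ∧
    ∫ b : ℝ, eC (a * b * σ) * Real.sign (a - b) * (if 0 < a * b then 1 else 0) *
      eC (a * p + b * q) = 2 * k1 σ p q a - k2 σ p q a := by
  set z : ℂ := a * σ + q with hz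
  set E : ℝ → ℂ := fun b => eC (b * z) with hE
  have eE : ∀ b : ℝ, eC (a * b * σ) * eC (a * p + b * q) = eC (a * p) * E b := by
    intro b
    simp only [hE, hz]
    rw [← eC_add, ← eC_add]; congr 1; ring
  have ek : 2 * k1 σ p q a - k2 σ p q a =
      eC (a * p) * (2 * (eC (a * z) / (2 * Real.pi * Complex.I * z)) - 1 / (2 * Real.pi * Complex.I * z)) := by
    unfold k1 k2
    rw [← hz]
    have : (a * (p + q) + a ^ 2 * σ : ℂ) = a * p + a * z := by rw [hz]; ring
    rw [this, eC_add]
    ring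
  rcases lt_or_gt_of_ne ha with h | h
  · have hzi : z.im < 0 := by simp [hz]; nlinarith
    obtain ⟨i1, j1⟩ := eC_integral_Iic z hzi a
    obtain ⟨i2, j2⟩ := eC_integral_Iic z hzi 0
    have hae : (fun b : ℝ => eC (a * p) * (2 * (Iic a).indicator E b - (Iic 0).indicator E b)) =ᵐ[volume]
      (fun b : ℝ => eC (a * b * σ) * Real.sign (a - b) * (if 0 < a * b then 1 else 0) *
      eC (a * p + b * q)) := by
      filter_upwards [Measure.ae_ne volume a, Measure.ae_ne volume 0] with b hb hb0
      rcases lt_or_gt_of_ne hb0 with h0 | h0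
      · have h1 : 0 < a * b := mul_pos_of_neg_of_neg h h0
        rw [if_pos h1, indicator_of_mem (show b ∈ Iic 0 from h0.le)]
        rcases lt_or_gt_of_ne hb with h3 | h3
        · rw [indicator_of_mem (show b ∈ Iic a from h3.le), Real.sign_of_pos (by linarith)]
          push_cast
          linear_combination - eE b
        · rw [indicator_of_notMem (show b ∉ Iic a from not_le.2 h3), Real.sign_of_neg (by linarith)]
          push_cast
          linear_combination eE b
      · have h1 : ¬ 0 < a * b := by nlinarith
        rw [if_neg h1, indicator_of_notMem (show b ∉ Iic 0 from not_le.2 h0),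
          indicator_of_notMem (show b ∉ Iic a from not_le.2 (h.trans h0))]
        simp
    have I1 := (integrable_indicator_iff (measurableSet_Iic (a := a))).2 i1
    have I2 := (integrable_indicator_iff (measurableSet_Iic (a := (0:ℝ)))).2 i2
    refine ⟨(((I1.const_mul 2).sub I2).const_mul _).congr hae, ?_⟩
    rw [← integral_congr_ae hae, MeasureTheory.integral_const_mul,
      MeasureTheory.integral_sub (I1.const_mul 2) I2, MeasureTheory.integral_const_mul,
      MeasureTheory.integral_indicator measurableSet_Iic,
      MeasureTheory.integral_indicator measurableSet_Iic, j1, j2, ek]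
    simp [eC_zero]
  · have hzi : 0 < z.im := by simp [hz]; positivity
    obtain ⟨i1, j1⟩ := eC_integral_Ioi z hzi a
    obtain ⟨i2, j2⟩ := eC_integral_Ioi z hzi 0
    have hae : (fun b : ℝ => eC (a * p) * ((Ioi 0).indicator E b - 2 * (Ioi a).indicator E b)) =ᵐ[volume]
      (fun b : ℝ => eC (a * b * σ) * Real.sign (a - b) * (if 0 < a * b then 1 else 0) *
      eC (a * p + b * q)) := by
      filter_upwards [Measure.ae_ne volume a, Measure.ae_ne volume 0] with b hb hb0
      rcases lt_or_gt_of_ne hb0 with h0 | h0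
      · have h1 : ¬ 0 < a * b := by nlinarith
        rw [if_neg h1, indicator_of_notMem (show b ∉ Ioi 0 from not_lt.2 h0.le),
          indicator_of_notMem (show b ∉ Ioi a from not_lt.2 (h0.trans h).le)]
        simp
      · have h1 : 0 < a * b := mul_pos h h0
        rw [if_pos h1, indicator_of_mem (show b ∈ Ioi 0 from h0)]
        rcases lt_or_gt_of_ne hb with h3 | h3
        · rw [indicator_of_notMem (show b ∉ Ioi a from not_lt.2 h3.le), Real.sign_of_pos (by linarith)]
          push_cast
          linear_combination - eE b
        · rw [indicator_of_mem (show b ∈ Ioi a from h3), Real.sign_of_neg (by linarith)]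
          push_cast
          linear_combination eE b
    have I1 := (integrable_indicator_iff (measurableSet_Ioi (a := a))).2 i1
    have I2 := (integrable_indicator_iff (measurableSet_Ioi (a := (0:ℝ)))).2 i2
    refine ⟨((I2.sub (I1.const_mul 2)).const_mul _).congr hae, ?_⟩
    rw [← integral_congr_ae hae, MeasureTheory.integral_const_mul,
      MeasureTheory.integral_sub I2 (I1.const_mul 2), MeasureTheory.integral_const_mul,
      MeasureTheory.integral_indicator measurableSet_Ioi,
      MeasureTheory.integral_indicator measurableSet_Ioi, j1, j2, ek]
    rw [Complex.ofReal_zero, zero_mul, eC_zero]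
    ring

def cK (σ : ℂ) : ℝ := Real.sqrt (2 * Real.pi * σ.im)

lemma cK_sq (σ : ℂ) (hσ : 0 < σ.im) : cK σ ^ 2 = 2 * Real.pi * σ.im := by
  unfold cK; rw [Real.sq_sqrt (by positivity)]

def hS (σ : ℂ) (X : ℝ) : ℂ := eC (-((X : ℂ) ^ 2 / 2) * σ) * Real.sign X * erfc (cK σ * |X|)

lemma measurable_rsign : Measurable Real.sign := by
  have : Real.sign = fun r : ℝ => if r < 0 then (-1 : ℝ) else if 0 < r then 1 else 0 := rfl
  rw [this]
  exact Measurable.ite measurableSet_Iio measurable_const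
    (Measurable.ite measurableSet_Ioi measurable_const measurable_const)

lemma abs_sign_le (r : ℝ) : |Real.sign r| ≤ 1 := by
  rcases Real.sign_apply_eq r with h | h | h <;> simp [h]

lemma hS_meas (σ : ℂ) : Measurable (hS σ) := by
  unfold hS
  have h1 := measurable_rsign
  have h2 : Measurable (fun X : ℝ => eC (-((X : ℂ) ^ 2 / 2) * σ)) :=
    Continuous.measurable (by fun_prop)
  have h3 : Measurable (fun X : ℝ => (erfc (cK σ * |X|) : ℂ)) :=
    Continuous.measurable (by fun_prop)
  exact (h2.mul (Complex.measurable_ofReal.comp h1)).mul h3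

lemma hS_bound (σ : ℂ) (hσ : 0 < σ.im) (X : ℝ) :
    ‖hS σ X‖ ≤ Real.exp (-(Real.pi * σ.im) * X ^ 2) := by
  unfold hS
  rw [norm_mul, norm_mul, norm_eC, Complex.norm_real, Complex.norm_real, Real.norm_eq_abs,
    Real.norm_eq_abs, abs_of_nonneg (erfc_nonneg _)]
  have h1 := erfc_le (cK σ * |X|) (mul_nonneg (Real.sqrt_nonneg _) (abs_nonneg _))
  rw [mul_pow, cK_sq σ hσ, sq_abs] at h1
  have h2 := abs_sign_le X
  have e : (-((X : ℂ) ^ 2 / 2) * σ).im = -(X ^ 2 / 2) * σ.im := by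
    have : (-((X : ℂ) ^ 2 / 2) * σ) = ((-(X ^ 2 / 2) : ℝ) : ℂ) * σ := by push_cast; ring
    rw [this, Complex.im_ofReal_mul]
  rw [e]
  calc _ ≤ Real.exp (-(2 * Real.pi * (-(X ^ 2 / 2) * σ.im))) * 1 *
        Real.exp (-(2 * Real.pi * σ.im * X ^ 2)) := by
        gcongr
        exact erfc_nonneg _
    _ = _ := by
      rw [mul_one, ← Real.exp_add]; congr 1; ring

lemma hS_int (σ : ℂ) (hσ : 0 < σ.im) : Integrable (hS σ) :=
  (integrable_exp_neg_mul_sq (b := Real.pi * σ.im) (by positivity)).mono'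
    (hS_meas σ).aestronglyMeasurable (Eventually.of_forall (hS_bound σ hσ))

lemma hS_int1 (σ : ℂ) (hσ : 0 < σ.im) : Integrable (fun X : ℝ => (X : ℂ) * hS σ X) := by
  have := (integrable_mul_exp_neg_mul_sq (b := Real.pi * σ.im) (by positivity)).norm
  refine this.mono' (Complex.measurable_ofReal.mul (hS_meas σ)).aestronglyMeasurable
    (Eventually.of_forall fun X => ?_)
  rw [norm_mul, norm_mul, Complex.norm_real, Real.norm_of_nonneg (Real.exp_pos _).le]
  gcongr
  exact hS_bound σ hσ X

lemma int_mul_eC {f : ℝ → ℂ} (hf : Integrable f) (x : ℝ) :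
    Integrable (fun X : ℝ => f X * eC (-(X * x))) := by
  refine hf.norm.mono' (hf.1.mul (Continuous.aestronglyMeasurable (by fun_prop)))
    (Eventually.of_forall fun X => ?_)
  have : (-(X * x) : ℂ) = ((-(X * x) : ℝ) : ℂ) := by push_cast; ring
  rw [norm_mul, this, norm_eC_real, mul_one]

def Hh (σ : ℂ) (x : ℝ) : ℂ := ∫ X : ℝ, hS σ X * eC (-(X * x))

lemma Hh_deriv (σ : ℂ) (hσ : 0 < σ.im) (x : ℝ) :
    HasDerivAt (Hh σ) (∫ X : ℝ, -(2 * Real.pi * Complex.I) * ((X * hS σ X) * eC (-(X * x)))) x := by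
  have hb := ((hS_int1 σ hσ).norm.const_mul (2 * Real.pi))
  refine (hasDerivAt_integral_of_dominated_loc_of_deriv_le (μ := volume)
    (F := fun (x : ℝ) (X : ℝ) => hS σ X * eC (-(X * x)))
    (F' := fun (x : ℝ) (X : ℝ) => -(2 * Real.pi * Complex.I) * ((X * hS σ X) * eC (-(X * x))))
    (s := univ) univ_mem
    (Eventually.of_forall fun y => (int_mul_eC (hS_int σ hσ) y).1) (int_mul_eC (hS_int σ hσ) x)
    ((int_mul_eC (hS_int1 σ hσ) x).const_mul _).1 ?_ hb ?_).2
  · refine Eventually.of_forall fun X y _ => ?_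
    have : (-(X * y) : ℂ) = ((-(X * y) : ℝ) : ℂ) := by push_cast; ring
    rw [norm_mul, norm_mul (_ * _) (eC _), this, norm_eC_real, mul_one]
    simp [abs_of_pos Real.pi_pos]
  · refine Eventually.of_forall fun X y _ => ?_
    have h1 : HasDerivAt (fun a : ℝ => (a : ℂ)) 1 y := Complex.ofRealCLM.hasDerivAt
    have h3 := (hasDerivAt_eC ((h1.const_mul (X : ℂ)).fun_neg)).const_mul (hS σ X)
    refine h3.congr_deriv ?_
    ring

/-- one-sided smooth extension -/
def FF (σ : ℂ) (x s X : ℝ) : ℂ :=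
  s * eC (-((X : ℂ) ^ 2 / 2) * σ + -(X * x)) * (erfc (s * cK σ * X) : ℂ)

def Kc (σ : ℂ) : ℝ := 2 / Real.sqrt Real.pi * cK σ

def DD (σ : ℂ) (x X : ℝ) : ℂ :=
  (-(2 * Real.pi * Complex.I) * ((X * hS σ X) * eC (-(X * x)))) * σ
    - 2 * Real.pi * Complex.I * x * (hS σ X * eC (-(X * x)))
    - Kc σ * eC ((X : ℂ) ^ 2 / 2 * (-(starRingEnd ℂ σ)) + X * (-x))

lemma FF_eq_pos (σ : ℂ) (x X : ℝ) (h : 0 < X) : FF σ x 1 X = hS σ X * eC (-(X * x)) := by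
  unfold FF hS
  rw [Real.sign_of_pos h, abs_of_pos h, eC_add]
  push_cast; simp; ring

lemma FF_eq_neg (σ : ℂ) (x X : ℝ) (h : X < 0) : FF σ x (-1) X = hS σ X * eC (-(X * x)) := by
  unfold FF hS
  rw [Real.sign_of_neg h, abs_of_neg h, eC_add]
  push_cast; simp; ring

lemma FF_deriv (σ : ℂ) (hσ : 0 < σ.im) (x s X : ℝ) (hs : s ^ 2 = 1) :
    HasDerivAt (FF σ x s) (2 * Real.pi * Complex.I * (-X * σ - x) * FF σ x s X
      - Kc σ * eC ((X : ℂ) ^ 2 / 2 * (-(starRingEnd ℂ σ)) + X * (-x))) X := by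
  have h1 : HasDerivAt (fun a : ℝ => (a : ℂ)) 1 X := Complex.ofRealCLM.hasDerivAt
  have h2 := hasDerivAt_eC (((h1.fun_pow 2).div_const 2).fun_neg.mul_const σ |>.fun_add
    (h1.mul_const (x : ℂ)).fun_neg)
  have h3 : HasDerivAt (fun X : ℝ => erfc (s * cK σ * X))
      (-((2 / Real.sqrt Real.pi) * Real.exp (-((s * cK σ * X) ^ 2))) * (s * cK σ)) X := by
    have h := HasDerivAt.comp X (erfc_hasDerivAt (s * cK σ * X))
      ((hasDerivAt_id X).const_mul (s * cK σ))
    rw [mul_one] at h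
    exact h
  have h4 := (h2.const_mul (s : ℂ)).fun_mul h3.ofReal_comp
  refine h4.congr_deriv ?_
  have e1 : (s * cK σ * X) ^ 2 = 2 * Real.pi * σ.im * X ^ 2 := by
    rw [mul_pow, mul_pow, hs, cK_sq σ hσ, one_mul]
  have e2 : eC ((X : ℂ) ^ 2 / 2 * (-(starRingEnd ℂ σ)) + X * (-x)) =
      eC (-((X : ℂ) ^ 2 / 2) * σ + -(X * x)) * (Real.exp (-(2 * Real.pi * σ.im * X ^ 2)) : ℂ) := by
    unfold eC
    rw [Complex.ofReal_exp, ← Complex.exp_add]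
    congr 1
    have : starRingEnd ℂ σ = σ - 2 * σ.im * Complex.I := by
      apply Complex.ext <;> simp; ring
    rw [this]
    push_cast
    linear_combination (2 * Real.pi * X ^ 2 * σ.im : ℂ) * Complex.I_sq
  have hsc : (s : ℂ) ^ 2 = 1 := by exact_mod_cast hs
  rw [e1, e2]
  unfold FF Kc
  generalize eC (-((X : ℂ) ^ 2 / 2) * σ + -(X * x)) = A
  push_cast
  generalize Complex.exp _ = B
  linear_combination (- A * B * (2 / Real.sqrt Real.pi) * cK σ : ℂ) * hsc

lemma DD_int (σ : ℂ) (hσ : 0 < σ.im) (x : ℝ) : Integrable (DD σ x) := by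
  unfold DD
  refine Integrable.sub (Integrable.sub ?_ ?_) ?_
  · exact ((int_mul_eC (hS_int1 σ hσ) x).const_mul _).mul_const _
  · exact (int_mul_eC (hS_int σ hσ) x).const_mul _
  · exact (gauss_integrable _ (by simpa using hσ) _).const_mul _

lemma DD_integral (σ : ℂ) (hσ : 0 < σ.im) (x : ℝ) : ∫ X, DD σ x X = -2 := by
  have hI := DD_int σ hσ x
  have d1 : ∀ X ∈ Ioi (0:ℝ), HasDerivAt (FF σ x 1) (DD σ x X) X := by
    intro X hX
    refine (FF_deriv σ hσ x 1 X (by norm_num)).congr_deriv ?_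
    rw [FF_eq_pos σ x X hX]; unfold DD; ring
  have d2 : ∀ X ∈ Iio (0:ℝ), HasDerivAt (FF σ x (-1)) (DD σ x X) X := by
    intro X hX
    refine (FF_deriv σ hσ x (-1) X (by norm_num)).congr_deriv ?_
    rw [FF_eq_neg σ x X hX]; unfold DD; ring
  have g := int_mul_eC (hS_int σ hσ) x
  have i1 : IntegrableOn (FF σ x 1) (Ioi 0) :=
    (g.integrableOn (s := Ioi 0)).congr_fun (fun X hX => (FF_eq_pos σ x X hX).symm) measurableSet_Ioi
  have i2 : IntegrableOn (FF σ x (-1)) (Iic (-1)) :=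
    (g.integrableOn (s := Iic (-1))).congr_fun (fun X hX => (FF_eq_neg σ x X
      (lt_of_le_of_lt hX (by norm_num))).symm) measurableSet_Iic
  have t1 := tendsto_zero_of_hasDerivAt_of_integrableOn_Ioi d1 hI.integrableOn i1
  have t2 := tendsto_zero_of_hasDerivAt_of_integrableOn_Iic (a := -1)
    (fun X hX => d2 X (show X < 0 from lt_of_le_of_lt (show X ≤ -1 from hX) (by norm_num))) hI.integrableOn i2
  have r1 := integral_Ioi_of_hasDerivAt_of_tendsto
    (FF_deriv σ hσ x 1 0 (by norm_num)).continuousAt.continuousWithinAt d1 hI.integrableOn t1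
  have r2 := integral_Iic_of_hasDerivAt_of_tendsto
    (FF_deriv σ hσ x (-1) 0 (by norm_num)).continuousAt.continuousWithinAt d2 hI.integrableOn t2
  rw [← intervalIntegral.integral_Iic_add_Ioi (b := 0) hI.integrableOn hI.integrableOn, r1, r2]
  simp [FF, erfc_zero, eC_zero]
  norm_num

lemma Hh_zero (σ : ℂ) : Hh σ 0 = 0 := by
  unfold Hh
  have h := MeasureTheory.integral_neg_eq_self (μ := volume)
    (fun X : ℝ => hS σ X * eC (-(X * (0:ℝ))))
  have e : ∀ X : ℝ, hS σ (-X) * eC (-((-X : ℝ) * (0:ℝ))) = - (hS σ X * eC (-(X * (0:ℝ)))) := by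
    intro X
    unfold hS
    rw [Real.sign_neg, abs_neg]
    push_cast
    simp
  simp_rw [e, MeasureTheory.integral_neg] at h
  exact CharZero.neg_eq_self_iff.1 h

lemma Hh_ode (σ τ : ℂ) (hσ : 0 < σ.im) (hst : σ * τ = -1) (x : ℝ) :
    HasDerivAt (Hh σ) (-(2 * Real.pi * Complex.I * x * τ) * Hh σ x + 2 * τ
      - τ * Kc σ * sqK (-(starRingEnd ℂ τ)) * eC ((x : ℂ) ^ 2 / 2 * (-(starRingEnd ℂ τ)))) x := by
  refine (Hh_deriv σ hσ x).congr_deriv ?_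
  have h := DD_integral σ hσ x
  have hst' : -(starRingEnd ℂ σ) * -(starRingEnd ℂ τ) = -1 := by
    rw [neg_mul_neg, ← map_mul, hst]; simp
  have hg := gauss_integral _ _ (show 0 < (-(starRingEnd ℂ σ)).im by simpa using hσ) hst' (-x)
  unfold DD at h
  have j1 := ((int_mul_eC (hS_int1 σ hσ) x).const_mul (-(2 * Real.pi * Complex.I))).mul_const σ
  have j2 := (int_mul_eC (hS_int σ hσ) x).const_mul (2 * Real.pi * Complex.I * x)
  have j3 := (gauss_integrable (-(starRingEnd ℂ σ)) (by simpa using hσ) (-x)).const_mul (Kc σ : ℂ)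
  have j12 : Integrable (fun X : ℝ => -(2 * Real.pi * Complex.I) * ((X * hS σ X) * eC (-(X * x))) * σ
      - 2 * Real.pi * Complex.I * x * (hS σ X * eC (-(X * x)))) := j1.sub j2
  rw [MeasureTheory.integral_sub j12 j3, MeasureTheory.integral_sub j1 j2,
    MeasureTheory.integral_mul_const, MeasureTheory.integral_const_mul (2 * Real.pi * Complex.I * x),
    MeasureTheory.integral_const_mul (Kc σ : ℂ), hg, neg_sq] at h
  unfold Hh
  generalize (∫ X : ℝ, -(2 * Real.pi * Complex.I) * ((X * hS σ X) * eC (-(X * x)))) = A at *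
  linear_combination (-τ) * h + A * hst

lemma Hh_formula (σ τ : ℂ) (hτ : 0 < τ.im) (hσ : 0 < σ.im) (hst : σ * τ = -1) (x : ℝ) :
    eC ((x : ℂ) ^ 2 / 2 * τ) * Hh σ x = 2 * τ * (∫ s in (0:ℝ)..x, eC ((s : ℂ) ^ 2 / 2 * τ))
      - τ * Kc σ * sqK (-(starRingEnd ℂ τ)) *
        (∫ s in (0:ℝ)..x, (Real.exp (-(2 * Real.pi * τ.im * s ^ 2)) : ℂ)) := by
  set Φ : ℝ → ℂ := fun x => eC ((x : ℂ) ^ 2 / 2 * τ) * Hh σ x -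
    (2 * τ * (∫ s in (0:ℝ)..x, eC ((s : ℂ) ^ 2 / 2 * τ))
      - τ * Kc σ * sqK (-(starRingEnd ℂ τ)) *
        (∫ s in (0:ℝ)..x, (Real.exp (-(2 * Real.pi * τ.im * s ^ 2)) : ℂ))) with hΦ
  have hd : ∀ x, HasDerivAt Φ 0 x := by
    intro x
    have h1 : HasDerivAt (fun a : ℝ => (a : ℂ)) 1 x := Complex.ofRealCLM.hasDerivAt
    have h2 := hasDerivAt_eC (((h1.fun_pow 2).div_const 2).mul_const τ)
    have c1 : Continuous (fun s : ℝ => eC ((s : ℂ) ^ 2 / 2 * τ)) := by fun_prop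
    have c2 : Continuous (fun s : ℝ => (Real.exp (-(2 * Real.pi * τ.im * s ^ 2)) : ℂ)) := by fun_prop
    have h3 := (c1.integral_hasStrictDerivAt 0 x).hasDerivAt.const_mul (2 * τ)
    have h4 := (c2.integral_hasStrictDerivAt 0 x).hasDerivAt.const_mul
      (τ * Kc σ * sqK (-(starRingEnd ℂ τ)))
    have h5 := (h2.fun_mul (Hh_ode σ τ hσ hst x)).fun_sub (h3.fun_sub h4)
    refine h5.congr_deriv ?_
    have e2 : eC ((x : ℂ) ^ 2 / 2 * τ) * eC ((x : ℂ) ^ 2 / 2 * (-(starRingEnd ℂ τ))) =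
       (Real.exp (-(2 * Real.pi * τ.im * x ^ 2)) : ℂ) := by
      rw [← eC_add]
      unfold eC
      rw [Complex.ofReal_exp]
      congr 1
      have : starRingEnd ℂ τ = τ - 2 * τ.im * Complex.I := by
        apply Complex.ext <;> simp; ring
      rw [this]
      push_cast
      linear_combination (2 * Real.pi * x ^ 2 * τ.im : ℂ) * Complex.I_sq
    rw [← e2]
    push_cast
    ring
  have hc := is_const_of_deriv_eq_zero (f := Φ) (fun x => (hd x).differentiableAt)
    (fun x => (hd x).deriv) x 0
  have h0 : Φ 0 = 0 := by simp [hΦ, Hh_zero]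
  rw [h0] at hc
  exact sub_eq_zero.1 hc

lemma rot_mp : MeasurePreserving
    (fun z : ℝ × ℝ => ((z.1 - z.2) / Real.sqrt 2, (z.1 + z.2) / Real.sqrt 2)) := by
  set r : ℝ := (Real.sqrt 2)⁻¹ with hr
  have hr2 : r * r = 1 / 2 := by
    rw [hr, ← mul_inv, Real.mul_self_sqrt (by norm_num)]; norm_num
  set L : (ℝ × ℝ) →ₗ[ℝ] (ℝ × ℝ) :=
    Matrix.toLin (Module.Basis.finTwoProd ℝ) (Module.Basis.finTwoProd ℝ) !![r, -r; r, r] with hL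
  have hdet : LinearMap.det L = 1 := by
    rw [hL, LinearMap.det_toLin, Matrix.det_fin_two_of]; linarith
  have hfun : (fun z : ℝ × ℝ => ((z.1 - z.2) / Real.sqrt 2, (z.1 + z.2) / Real.sqrt 2)) = L := by
    ext z
    · simp only [hL, Matrix.toLin_finTwoProd_apply, div_eq_mul_inv, ← hr]; ring
    · simp only [hL, Matrix.toLin_finTwoProd_apply, div_eq_mul_inv, ← hr]; ring
  rw [hfun]
  refine ⟨?_, ?_⟩
  · rw [← hfun]; fun_prop
  · rw [Measure.map_linearMap_addHaar_eq_smul_addHaar _ (by rw [hdet]; norm_num), hdet]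
    simp

/-- The star part of the rotated integrand. -/
def starF (σ : ℂ) (x y a b : ℝ) : ℂ :=
  (hS σ ((a - b) / Real.sqrt 2) * eC (-(((a - b) / Real.sqrt 2 : ℝ) * x))) *
    eC ((((a + b) / Real.sqrt 2 : ℝ) : ℂ) ^ 2 / 2 * σ + ((a + b) / Real.sqrt 2 : ℝ) * y)

lemma starF_meas (σ : ℂ) (x y : ℝ) : Measurable (fun z : ℝ × ℝ => starF σ x y z.1 z.2) := by
  unfold starF
  have h1 : Measurable (fun z : ℝ × ℝ => hS σ ((z.1 - z.2) / Real.sqrt 2)) :=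
    (hS_meas σ).comp (by fun_prop)
  have h2 : Measurable (fun z : ℝ × ℝ => eC (-(((z.1 - z.2) / Real.sqrt 2 : ℝ) * x))) :=
    Continuous.measurable (by fun_prop)
  have h3 : Measurable (fun z : ℝ × ℝ => eC ((((z.1 + z.2) / Real.sqrt 2 : ℝ) : ℂ) ^ 2 / 2 * σ +
    ((z.1 + z.2) / Real.sqrt 2 : ℝ) * y)) := Continuous.measurable (by fun_prop)
  exact (h1.mul h2).mul h3

lemma starF_bound (σ : ℂ) (hσ : 0 < σ.im) (x y a b : ℝ) :
    ‖starF σ x y a b‖ ≤ Real.exp (-(Real.pi * σ.im) * b ^ 2) := by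
  unfold starF
  set X := (a - b) / Real.sqrt 2 with hX
  set Y := (a + b) / Real.sqrt 2 with hY
  have h2 : Real.sqrt 2 ^ 2 = 2 := Real.sq_sqrt (by norm_num)
  have hs : X ^ 2 + Y ^ 2 = a ^ 2 + b ^ 2 := by
    rw [hX, hY, div_pow, div_pow, h2]; ring
  have e1 : ‖eC (-((X : ℂ) * x))‖ = 1 := by
    have := norm_eC_real (-(X * x)); push_cast at this; exact this
  have e2 : ‖eC ((Y : ℂ) ^ 2 / 2 * σ + Y * y)‖ = Real.exp (-(Real.pi * σ.im) * Y ^ 2) := by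
    rw [norm_eC]
    have : ((Y : ℂ) ^ 2 / 2 * σ + Y * y) = ((Y ^ 2 / 2 : ℝ) : ℂ) * σ + ((Y * y : ℝ) : ℂ) := by
      push_cast; ring
    rw [this, Complex.add_im, Complex.im_ofReal_mul, Complex.ofReal_im]
    congr 1; ring
  rw [norm_mul, norm_mul, e1, e2, mul_one]
  calc _ ≤ Real.exp (-(Real.pi * σ.im) * X ^ 2) * Real.exp (-(Real.pi * σ.im) * Y ^ 2) := by
        gcongr; exact hS_bound σ hσ X
    _ = Real.exp (-(Real.pi * σ.im) * (a ^ 2 + b ^ 2)) := by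
        rw [← Real.exp_add, ← hs]; congr 1; ring
    _ ≤ _ := by
        apply Real.exp_le_exp.2
        have : 0 ≤ Real.pi * σ.im * a ^ 2 := by positivity
        linarith

lemma starF_int (σ : ℂ) (hσ : 0 < σ.im) (x y a : ℝ) : Integrable (fun b => starF σ x y a b) :=
  (integrable_exp_neg_mul_sq (b := Real.pi * σ.im) (by positivity)).mono'
    ((starF_meas σ x y).comp (measurable_const.prodMk measurable_id)).aestronglyMeasurable
    (Eventually.of_forall (starF_bound σ hσ x y a))

lemma starF_total (σ τ : ℂ) (hσ : 0 < σ.im) (hst : σ * τ = -1) (x y : ℝ) :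
    Integrable (fun a => ∫ b, starF σ x y a b) ∧
    ∫ a, ∫ b, starF σ x y a b = Hh σ x * (sqK τ * eC ((y : ℂ) ^ 2 / 2 * τ)) := by
  have g1 := int_mul_eC (hS_int σ hσ) x
  have g2 := gauss_integrable σ hσ y
  have gI := g1.mul_prod g2
  have hI : Integrable (fun z : ℝ × ℝ => starF σ x y z.1 z.2) (volume.prod volume) :=
    (rot_mp.integrable_comp gI.aestronglyMeasurable).2 gI
  refine ⟨hI.integral_prod_left, ?_⟩
  have e1 := MeasureTheory.integral_prod _ hI
  rw [← e1]
  have e2 := integral_map (μ := (volume : Measure (ℝ × ℝ))) rot_mp.measurable.aemeasurable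
    (f := fun z : ℝ × ℝ => (hS σ z.1 * eC (-(z.1 * x))) * eC ((z.2 : ℂ) ^ 2 / 2 * σ + z.2 * y))
    (by rw [rot_mp.map_eq]; exact gI.aestronglyMeasurable)
  rw [rot_mp.map_eq] at e2
  refine e2.symm.trans ?_
  rw [Measure.volume_eq_prod, integral_prod_mul (fun X : ℝ => hS σ X * eC (-(X * x)))
    (fun Y : ℝ => eC ((Y : ℂ) ^ 2 / 2 * σ + Y * y)), gauss_integral σ τ hσ hst]
  rfl

lemma integrand_eq (σ : ℂ) (x y a b : ℝ) :
    ftTildeIntegrand σ x y a b =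
      eC (a * b * σ) * Real.sign (a - b) * (if 0 < a * b then 1 else 0) *
      eC (a * ((y - x) / Real.sqrt 2 : ℝ) + b * ((y + x) / Real.sqrt 2 : ℝ))
      - starF σ x y a b := by
  unfold ftTildeIntegrand phiTilde phiPlus phiStar starF hS cK
  have h2 : Real.sqrt 2 ^ 2 = 2 := Real.sq_sqrt (by norm_num)
  have h2c : (Real.sqrt 2 : ℂ) ^ 2 = 2 := by exact_mod_cast h2
  have h0 : 0 < Real.sqrt 2 := by positivity
  have h0c : (Real.sqrt 2 : ℂ) ≠ 0 := by exact_mod_cast h0.ne'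
  have e1 : (((((a + b) / Real.sqrt 2 : ℝ) : ℂ) ^ 2 - (((a - b) / Real.sqrt 2 : ℝ) : ℂ) ^ 2) / 2) * σ
      = a * b * σ := by
    push_cast
    rw [div_pow, div_pow, h2c]; ring
  have e2 : Real.sign ((a - b) / Real.sqrt 2) = Real.sign (a - b) := by
    rcases lt_trichotomy (a - b) 0 with h | h | h
    · rw [Real.sign_of_neg h, Real.sign_of_neg (div_neg_of_neg_of_pos h h0)]
    · rw [h]; simp
    · rw [Real.sign_of_pos h, Real.sign_of_pos (div_pos h h0)]
  have e3 : (((a - b) / Real.sqrt 2) ^ 2 < ((a + b) / Real.sqrt 2) ^ 2) ↔ 0 < a * b := by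
    rw [div_pow, div_pow, h2]
    constructor <;> intro h <;> linarith
  have e4 : ((-(((a - b) / Real.sqrt 2) * x) + ((a + b) / Real.sqrt 2) * y : ℝ) : ℂ) =
      a * ((y - x) / Real.sqrt 2 : ℝ) + b * ((y + x) / Real.sqrt 2 : ℝ) := by
    push_cast; ring
  have e5 : ((-(((a - b) / Real.sqrt 2) * x) + ((a + b) / Real.sqrt 2) * y : ℝ) : ℂ) =
    -(((a - b) / Real.sqrt 2 : ℝ) * x) + ((a + b) / Real.sqrt 2 : ℝ) * y := by
    push_cast; ring
  rw [sub_mul]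
  congr 1
  · rw [e1, e2, e4]
    simp only [e3]
  · rw [e5]
    generalize (((a - b) / Real.sqrt 2 : ℝ)) = X
    generalize (((a + b) / Real.sqrt 2 : ℝ)) = Y
    have e6 : eC (((Y : ℂ) ^ 2 - X ^ 2) / 2 * σ) =
        eC (-((X : ℂ) ^ 2 / 2) * σ) * eC ((Y : ℂ) ^ 2 / 2 * σ) := by
      rw [← eC_add]; congr 1; ring
    rw [e6, eC_add, eC_add]
    ring

lemma cK_norm (σ τ : ℂ) (hτ : 0 < τ.im) (hσ : 0 < σ.im) (hst : σ * τ = -1) :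
    ‖τ‖ * cK σ = cK τ := by
  have hτ0 : τ ≠ 0 := by rintro rfl; simp at hτ
  have hs : σ = -τ⁻¹ := by
    field_simp; linear_combination hst
  have him : ‖τ‖ ^ 2 * σ.im = τ.im := by
    rw [hs, Complex.neg_im, Complex.inv_im, Complex.normSq_eq_norm_sq]
    have : ‖τ‖ ≠ 0 := norm_ne_zero_iff.2 hτ0
    field_simp
  have h1 : (‖τ‖ * cK σ) ^ 2 = cK τ ^ 2 := by
    rw [mul_pow, cK_sq σ hσ, cK_sq τ hτ, ← him]; ring
  exact (pow_left_inj₀ (mul_nonneg (norm_nonneg _) (Real.sqrt_nonneg _)) (Real.sqrt_nonneg _)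
    (by norm_num)).1 h1

lemma erf_scale (τ : ℂ) (hτ : 0 < τ.im) (x : ℝ) :
    (Kc τ : ℂ) * (∫ s in (0:ℝ)..x, (Real.exp (-(2 * Real.pi * τ.im * s ^ 2)) : ℂ)) =
      1 - (erfc (cK τ * x) : ℂ) := by
  rw [intervalIntegral.integral_ofReal, erfc_eq]
  have h := intervalIntegral.smul_integral_comp_mul_left (a := 0) (b := x)
    (fun r : ℝ => Real.exp (-(r ^ 2))) (cK τ)
  rw [mul_zero] at h
  rw [← h]
  simp_rw [mul_pow, cK_sq τ hτ]
  unfold Kc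
  push_cast
  simp only [smul_eq_mul]
  push_cast
  ring

lemma erfc_neg' (t : ℝ) : erfc (-t) = 2 - erfc t := by
  rw [erfc_eq, erfc_eq]
  have h := intervalIntegral.integral_comp_neg (a := 0) (b := t)
    (fun r : ℝ => Real.exp (-(r ^ 2)))
  simp only [neg_sq, neg_zero] at h
  rw [h, intervalIntegral.integral_symm]
  ring

lemma star_value (σ τ : ℂ) (hτ : 0 < τ.im) (hσ : 0 < σ.im) (hst : σ * τ = -1) (x y : ℝ) :
    Hh σ x * (sqK τ * eC ((y : ℂ) ^ 2 / 2 * τ)) =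
      eC (((y : ℂ) ^ 2 - x ^ 2) / 2 * τ) * (2 * τ * sqK τ *
        (∫ s in (0:ℝ)..x, eC ((s : ℂ) ^ 2 / 2 * τ)) - τ * (1 - (erfc (cK τ * x) : ℂ))) := by
  have h := Hh_formula σ τ hτ hσ hst x
  rw [← erf_scale τ hτ x]
  have e : eC ((y : ℂ) ^ 2 / 2 * τ) = eC (((y : ℂ) ^ 2 - x ^ 2) / 2 * τ) * eC ((x : ℂ) ^ 2 / 2 * τ) := by
    rw [← eC_add]; congr 1; ring
  have hk : (Kc τ : ℂ) = sqK (-(starRingEnd ℂ τ)) * sqK τ * Kc σ := by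
    rw [sq_conj τ hτ]
    unfold Kc
    rw [← cK_norm σ τ hτ hσ hst]; push_cast; ring
  rw [e, hk]
  linear_combination (sqK τ * eC (((y : ℂ) ^ 2 - x ^ 2) / 2 * τ)) * h

lemma k2_cont (σ τ : ℂ) (hτ : 0 < τ.im) (hst : σ * τ = -1) (p q : ℝ) (hq : q ≠ 0) :
    Continuous (k2 σ p q) := by
  have hτ0 : τ ≠ 0 := by rintro rfl; simp at hτ
  have h : ∀ a : ℝ, 2 * Real.pi * Complex.I * (a * σ + q) ≠ 0 := by
    intro a h0
    have h1 : (a * σ + q : ℂ) = 0 := by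
      rcases mul_eq_zero.1 h0 with h | h
      · exact absurd h twoPiI_ne
      · exact h
    have h2 : (-(a : ℂ) + q * τ) = 0 := by
      linear_combination τ * h1 - a * hst
    have h3 := congrArg Complex.im h2
    simp at h3
    rcases h3 with h3 | h3
    · exact hq h3
    · exact hτ.ne' h3
  unfold k2
  exact Continuous.div (by fun_prop) (by fun_prop) h

lemma final_alg (τ : ℂ) (x y p q : ℝ) (hx : x ≠ 0)
    (hpq : p * q = (y ^ 2 - x ^ 2) / 2) (hd : q - p = Real.sqrt 2 * x) (hp : p ≠ 0) (hq : q ≠ 0)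
    (J : ℂ) :
    2 * (τ / 2 * eC (p * q * τ) * (-Real.sign q + 2 * sqK τ * J))
      - -τ * (if 0 < p * q then Real.sign p * eC (p * q * τ) else 0)
      - eC (((y : ℂ) ^ 2 - x ^ 2) / 2 * τ) * (2 * τ * sqK τ * J
        - τ * (1 - (erfc (cK τ * x) : ℂ))) = τ * phiTilde τ x y := by
  have hc : (p : ℂ) * q = ((y : ℂ) ^ 2 - x ^ 2) / 2 := by exact_mod_cast hpq
  unfold phiTilde phiPlus phiStar
  rw [← hc]
  have hif : (x ^ 2 < y ^ 2) ↔ 0 < p * q := by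
    rw [hpq]; constructor <;> intro h <;> linarith
  have hE : (1 - (erfc (cK τ * x) : ℂ)) = Real.sign x * (1 - (erfc (cK τ * |x|) : ℂ)) := by
    rcases lt_or_gt_of_ne hx with h | h
    · rw [abs_of_neg h, Real.sign_of_neg h, mul_neg, erfc_neg']; push_cast; ring
    · rw [abs_of_pos h, Real.sign_of_pos h]; push_cast; ring
  rw [hE]
  simp only [hif]
  change _ = τ * (_ - eC (p * q * τ) * Real.sign x * (erfc (cK τ * |x|) : ℂ))
  have h2 : 0 < Real.sqrt 2 := by positivity
  split_ifs with h
  · have : Real.sign p = Real.sign q := by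
      rcases pos_and_pos_or_neg_and_neg_of_mul_pos h with ⟨a, b⟩ | ⟨a, b⟩
      · rw [Real.sign_of_pos a, Real.sign_of_pos b]
      · rw [Real.sign_of_neg a, Real.sign_of_neg b]
    rw [this]; ring
  · have hneg : p * q < 0 := lt_of_le_of_ne (not_lt.1 h) (mul_ne_zero hp hq)
    have : Real.sign q = Real.sign x := by
      rcases mul_neg_iff.1 hneg with ⟨a, b⟩ | ⟨a, b⟩
      · have : x < 0 := by nlinarith
        rw [Real.sign_of_neg b, Real.sign_of_neg this]
      · have : 0 < x := by nlinarith
        rw [Real.sign_of_pos b, Real.sign_of_pos this]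
    rw [this]; ring

/-- the regularized Fourier transform of `φ̃_{-1/τ}` exists as an iterated
improper integral at any `(x,y)` with `x ≠ 0`, `x² ≠ y²`, and equals `τ·φ̃_τ(x,y)`. -/
theorem stmt6 (τ : ℂ) (hτ : 0 < τ.im) (x y : ℝ) (hx : x ≠ 0) (hxy : x ^ 2 ≠ y ^ 2) :
    ∃ g : ℝ → ℂ,
      (∀ a : ℝ, Tendsto (fun T : ℝ => ∫ b in (-T)..T, ftTildeIntegrand (-1 / τ) x y a b)
        atTop (nhds (g a))) ∧
      Tendsto (fun T' : ℝ => ∫ a in (-T')..T', g a) atTop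
        (nhds (τ * phiTilde τ x y)) := by
  have hτ0 : τ ≠ 0 := by rintro rfl; simp at hτ
  set σ : ℂ := -1 / τ with hσd
  have hst : σ * τ = -1 := by rw [hσd]; field_simp
  have hσ : 0 < σ.im := by
    have : σ = -τ⁻¹ := by rw [hσd]; field_simp
    rw [this, Complex.neg_im, Complex.inv_im]
    have : 0 < Complex.normSq τ := Complex.normSq_pos.2 hτ0
    have : 0 < τ.im / Complex.normSq τ := by positivity
    rw [neg_div, neg_neg]; exact this
  set p : ℝ := (y - x) / Real.sqrt 2 with hp_def
  set q : ℝ := (y + x) / Real.sqrt 2 with hq_def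
  have h2 : Real.sqrt 2 ^ 2 = 2 := Real.sq_sqrt (by norm_num)
  have h0 : Real.sqrt 2 ≠ 0 := by positivity
  have hpq : p * q = (y ^ 2 - x ^ 2) / 2 := by
    rw [hp_def, hq_def, div_mul_div_comm, ← sq (Real.sqrt 2), h2]; ring
  have hd : q - p = Real.sqrt 2 * x := by
    rw [hp_def, hq_def, ← sub_div, div_eq_iff h0]; linear_combination -x * h2
  have hpq0 : p * q ≠ 0 := by
    rw [hpq]; intro h; apply hxy; linarith
  have hp : p ≠ 0 := left_ne_zero_of_mul hpq0
  have hq : q ≠ 0 := right_ne_zero_of_mul hpq0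
  have hplus : ∀ a : ℝ, Integrable (fun b : ℝ => eC (a * b * σ) * Real.sign (a - b) *
      (if 0 < a * b then 1 else 0) * eC (a * p + b * q)) := by
    intro a
    by_cases ha : a = 0
    · subst ha
      simp
    · exact (inner_plus σ hσ p q a ha).1
  have hfe : ∀ a : ℝ, (fun b => ftTildeIntegrand σ x y a b) = fun b : ℝ =>
      eC (a * b * σ) * Real.sign (a - b) *
      (if 0 < a * b then 1 else 0) * eC (a * p + b * q) - starF σ x y a b := by
    intro a; ext b; exact integrand_eq σ x y a b
  have hInt0 : ∀ a : ℝ, Integrable (fun b => ftTildeIntegrand σ x y a b) := by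
    intro a; rw [hfe]; exact (hplus a).sub (starF_int σ hσ x y a)
  refine ⟨fun a => ∫ b, ftTildeIntegrand σ x y a b, fun a =>
    intervalIntegral_tendsto_integral (hInt0 a) tendsto_neg_atTop_atBot tendsto_id, ?_⟩
  obtain ⟨i1, v1⟩ := P1_all σ τ hτ hσ hst p q hq
  obtain ⟨i3, v3⟩ := starF_total σ τ hσ hst x y
  have c2 := k2_cont σ τ hτ hst p q hq
  have hg : ∀ a : ℝ, a ≠ 0 → ∫ b, ftTildeIntegrand σ x y a b =
      2 * k1 σ p q a - k2 σ p q a - ∫ b, starF σ x y a b := by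
    intro a ha
    rw [hfe, MeasureTheory.integral_sub (hplus a) (starF_int σ hσ x y a),
      (inner_plus σ hσ p q a ha).2]
  have hT : ∀ T : ℝ, ∫ a in (-T)..T, (∫ b, ftTildeIntegrand σ x y a b) =
      2 * (∫ a in (-T)..T, k1 σ p q a) - (∫ a in (-T)..T, k2 σ p q a)
        - ∫ a in (-T)..T, (∫ b, starF σ x y a b) := by
    intro T
    have hae : ∀ᵐ a : ℝ, a ≠ 0 := by
      simp [ae_iff]
    rw [intervalIntegral.integral_congr_ae (g := fun a => 2 * k1 σ p q a - k2 σ p q a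
      - ∫ b, starF σ x y a b) (by filter_upwards [hae] with a ha _ using hg a ha)]
    have j1 : IntervalIntegrable (fun a => 2 * k1 σ p q a) volume (-T) T :=
      (i1.const_mul 2).intervalIntegrable
    have j2 : IntervalIntegrable (fun a => k2 σ p q a) volume (-T) T := c2.intervalIntegrable _ _
    have j12 : IntervalIntegrable (fun a => 2 * k1 σ p q a - k2 σ p q a) volume (-T) T := j1.sub j2
    rw [intervalIntegral.integral_sub j12 i3.intervalIntegrable,
      intervalIntegral.integral_sub j1 j2, intervalIntegral.integral_const_mul]
  simp_rw [hT]
  have t1 := intervalIntegral_tendsto_integral i1 tendsto_neg_atTop_atBot tendsto_id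
  have t3 := intervalIntegral_tendsto_integral i3 tendsto_neg_atTop_atBot tendsto_id
  have t2 := P2_lim σ τ hτ hst p q hp hq
  have t := ((t1.const_mul 2).sub t2).sub t3
  have hdx : (q - p) / Real.sqrt 2 = x := by rw [hd]; field_simp
  rw [v1, v3, hdx, star_value σ τ hτ hσ hst,
    final_alg τ x y p q hx hpq hd hp hq] at t
  exact t

end
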